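/- arXiv:2304.05175 — 8 statements merged into one kernel-verified Lean document; each statement's English description precedes it below -/
import Mathlib

section
/- Under the KKT setup for a single storage unit at a single time period, if the locational marginal price satisfies λ_p > λ^{p,C1}, then p_ch · p_dc = 0, i.e., the complementarity constraint is satisfied and no simultaneous charging and discharging occurs (Theorem 1, Condition C1). -/
theorem condition_C1_exact_relaxation
    (η_ch η_dc g_ch g_dc Δt Pch Pdc p_ch p_dc Γ lam_p lam_ch1 lam_ch2 lam_dc1 lam_dc2 lam_S1 lam_S2 lam_relax : ℝ)
    (hηch0 : 0 < η_ch) (hηch1 : η_ch < 1) (hηdc0 : 0 < η_dc) (hηdc1 : η_dc < 1)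
    (hΔt : 0 < Δt) (hPch : 0 < Pch) (hPdc : 0 < Pdc)
    (hpch : 0 ≤ p_ch) (hpdc : 0 ≤ p_dc)
    (hch1 : 0 ≤ lam_ch1) (hch2 : 0 ≤ lam_ch2) (hdc1 : 0 ≤ lam_dc1) (hdc2 : 0 ≤ lam_dc2)
    (hS1 : 0 ≤ lam_S1) (hS2 : 0 ≤ lam_S2) (hrelax : 0 ≤ lam_relax)
    (hcs1 : lam_ch1 * p_ch = 0) (hcs2 : lam_dc1 * p_dc = 0)
    (hstat1 : g_ch + lam_p - lam_ch1 + lam_ch2 + lam_relax / Pch + 2 * lam_S2 * p_ch + η_ch * Γ * Δt = 0)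
    (hstat2 : g_dc - lam_p - lam_dc1 + lam_dc2 + lam_relax / Pdc + 2 * lam_S1 * p_dc - Γ * Δt / η_dc = 0)
    (hC1 : lam_p > (g_ch / η_dc + g_dc * η_ch) / (η_ch - 1 / η_dc) -
      ((lam_ch2 + 2 * lam_S2 * p_ch + lam_relax / Pch) / η_dc +
       (lam_dc2 + 2 * lam_S1 * p_dc + lam_relax / Pdc) * η_ch) / (1 / η_dc - η_ch)) :
    p_ch * p_dc = 0 := by
  by_contra hne
  have h1 : lam_ch1 = 0 := by
    rcases mul_eq_zero.mp hcs1 with h | h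
    · exact h
    · exact absurd (by rw [h, zero_mul]) hne
  have h2 : lam_dc1 = 0 := by
    rcases mul_eq_zero.mp hcs2 with h | h
    · exact h
    · exact absurd (by rw [h, mul_zero]) hne
  subst h1 h2
  have hinv : 1 < 1 / η_dc := by rw [lt_div_iff₀ hηdc0]; linarith
  have hD : 0 < 1 / η_dc - η_ch := by linarith
  have hneg : η_ch - 1 / η_dc = -(1 / η_dc - η_ch) := by ring
  rw [hneg, div_neg, gt_iff_lt, ← neg_div, ← sub_div, div_lt_iff₀ hD] at hC1
  have key : (g_ch + lam_p - 0 + lam_ch2 + lam_relax / Pch + 2 * lam_S2 * p_ch + η_ch * Γ * Δt) / η_dc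
      + η_ch * (g_dc - lam_p - 0 + lam_dc2 + lam_relax / Pdc + 2 * lam_S1 * p_dc - Γ * Δt / η_dc) = 0 := by
    rw [hstat1, hstat2]; simp
  apply lt_irrefl (0 : ℝ)
  generalize lam_relax / Pch = a at *
  generalize lam_relax / Pdc = b at *
  simp only [div_eq_mul_inv] at *
  linarith
end

section
/- Under the KKT setup for a single storage unit at a single time period, if the locational marginal price satisfies λ_p > λ^{p,C2}, then p_ch · p_dc = 0, i.e., the complementarity constraint is satisfied and no simultaneous charging and discharging occurs (Theorem 1, Condition C2). -/
theorem condition_C2_exact_relaxation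
    (η_ch η_dc g_ch g_dc Δt Pch Pdc p_ch p_dc Γ lam_p lam_ch1 lam_ch2 lam_dc1 lam_dc2 lam_S1 lam_S2 lam_relax : ℝ)
    (hηch0 : 0 < η_ch) (hηch1 : η_ch < 1) (hηdc0 : 0 < η_dc) (hηdc1 : η_dc < 1)
    (hΔt : 0 < Δt) (hPch : 0 < Pch) (hPdc : 0 < Pdc)
    (hpch : 0 ≤ p_ch) (hpdc : 0 ≤ p_dc)
    (hch1 : 0 ≤ lam_ch1) (hch2 : 0 ≤ lam_ch2) (hdc1 : 0 ≤ lam_dc1) (hdc2 : 0 ≤ lam_dc2)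
    (hS1 : 0 ≤ lam_S1) (hS2 : 0 ≤ lam_S2) (hrelax : 0 ≤ lam_relax)
    (hcs1 : lam_ch1 * p_ch = 0) (hcs2 : lam_dc1 * p_dc = 0)
    (hstat1 : g_ch + lam_p - lam_ch1 + lam_ch2 + lam_relax / Pch + 2 * lam_S2 * p_ch + η_ch * Γ * Δt = 0)
    (hstat2 : g_dc - lam_p - lam_dc1 + lam_dc2 + lam_relax / Pdc + 2 * lam_S1 * p_dc - Γ * Δt / η_dc = 0)
    (hC2 : lam_p > (g_ch / η_dc + g_dc * η_ch) / (η_ch - 1 / η_dc)) :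
    p_ch * p_dc = 0 := by 
  by_contra hne
  have h1 : p_ch ≠ 0 := fun h => hne (by rw [h, zero_mul])
  have h2 : p_dc ≠ 0 := fun h => hne (by rw [h, mul_zero])
  have e1 : lam_ch1 = 0 := (mul_eq_zero.mp hcs1).resolve_right h1
  have e2 : lam_dc1 = 0 := (mul_eq_zero.mp hcs2).resolve_right h2
  subst e1 e2
  have hu : 1 < 1 / η_dc := by rw [lt_div_iff₀ hηdc0]; linarith
  rw [div_eq_mul_one_div g_ch η_dc] at hC2
  rw [div_eq_mul_one_div (Γ * Δt) η_dc] at hstat2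
  generalize 1 / η_dc = u at *
  have hneg : η_ch - u < 0 := by linarith
  have hC := (div_lt_iff_of_neg hneg).mp hC2
  have a : 0 ≤ lam_ch2 + lam_relax / Pch + 2 * lam_S2 * p_ch := by positivity
  have b : 0 ≤ lam_dc2 + lam_relax / Pdc + 2 * lam_S1 * p_dc := by positivity
  have a' := mul_nonneg (show 0 ≤ u by linarith) a
  have b' := mul_nonneg hηch0.le b
  have key : (g_ch * u + g_dc * η_ch - lam_p * (η_ch - u))
      + u * (lam_ch2 + lam_relax / Pch + 2 * lam_S2 * p_ch)
      + η_ch * (lam_dc2 + lam_relax / Pdc + 2 * lam_S1 * p_dc) = 0 := by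
    linear_combination u * hstat1 + η_ch * hstat2
  linarith
end

section
/- Under the KKT setup for a single storage unit at a single time period, if g_ch + g_dc > 0 and λ_p ≥ −g_ch (the Relaxation conditions of group B in [14], Condition C3, adapted to ACOPF), then p_ch · p_dc = 0, i.e., no simultaneous charging and discharging occurs. -/
theorem condition_C3_groupB_exact_relaxation
    (η_ch η_dc g_ch g_dc Δt Pch Pdc p_ch p_dc Γ lam_p lam_ch1 lam_ch2 lam_dc1 lam_dc2 lam_S1 lam_S2 lam_relax : ℝ)
    (hηch0 : 0 < η_ch) (hηch1 : η_ch < 1) (hηdc0 : 0 < η_dc) (hηdc1 : η_dc < 1)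
    (hΔt : 0 < Δt) (hPch : 0 < Pch) (hPdc : 0 < Pdc)
    (hpch : 0 ≤ p_ch) (hpdc : 0 ≤ p_dc)
    (hch1 : 0 ≤ lam_ch1) (hch2 : 0 ≤ lam_ch2) (hdc1 : 0 ≤ lam_dc1) (hdc2 : 0 ≤ lam_dc2)
    (hS1 : 0 ≤ lam_S1) (hS2 : 0 ≤ lam_S2) (hrelax : 0 ≤ lam_relax)
    (hcs1 : lam_ch1 * p_ch = 0) (hcs2 : lam_dc1 * p_dc = 0)
    (hstat1 : g_ch + lam_p - lam_ch1 + lam_ch2 + lam_relax / Pch + 2 * lam_S2 * p_ch + η_ch * Γ * Δt = 0)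
    (hstat2 : g_dc - lam_p - lam_dc1 + lam_dc2 + lam_relax / Pdc + 2 * lam_S1 * p_dc - Γ * Δt / η_dc = 0)
    (hC3_1 : g_ch + g_dc > 0) (hC3_2 : lam_p ≥ -g_ch) :
    p_ch * p_dc = 0 := by
  by_contra hne
  have h1 : p_ch ≠ 0 := left_ne_zero_of_mul hne
  have h2 : p_dc ≠ 0 := right_ne_zero_of_mul hne
  have e1 : lam_ch1 = 0 := (mul_eq_zero.mp hcs1).resolve_right h1
  have e2 : lam_dc1 = 0 := (mul_eq_zero.mp hcs2).resolve_right h2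
  have a1 : 0 ≤ lam_relax / Pch := by positivity
  have a2 : 0 ≤ lam_relax / Pdc := by positivity
  have a3 : 0 ≤ 2 * lam_S2 * p_ch := by positivity
  have a4 : 0 ≤ 2 * lam_S1 * p_dc := by positivity
  -- the energy multiplier is nonpositive
  have hG : Γ * Δt ≤ 0 := by
    by_contra hpos
    have : 0 < η_ch * (Γ * Δt) := mul_pos hηch0 (not_le.mp hpos)
    linarith [mul_assoc η_ch Γ Δt]
  have hinv : 1 < 1 / η_dc := by rw [lt_div_iff₀ hηdc0]; linarith
  have hprod : 0 ≤ (-(Γ * Δt)) * (1 / η_dc - η_ch) :=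
    mul_nonneg (by linarith) (by linarith)
  have hexp : (-(Γ * Δt)) * (1 / η_dc - η_ch) = η_ch * Γ * Δt - Γ * Δt / η_dc := by ring
  linarith
end

section
/- Under the KKT setup for a single storage unit at a single time period, if g_ch + g_dc ≥ 0 and λ_p > −g_ch (the Relaxation conditions in [13], i.e., group A in [14], Condition C4, adapted to ACOPF), then p_ch · p_dc = 0, i.e., no simultaneous charging and discharging occurs. -/
theorem condition_C4_groupA_exact_relaxation
    (η_ch η_dc g_ch g_dc Δt Pch Pdc p_ch p_dc Γ lam_p lam_ch1 lam_ch2 lam_dc1 lam_dc2 lam_S1 lam_S2 lam_relax : ℝ)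
    (hηch0 : 0 < η_ch) (hηch1 : η_ch < 1) (hηdc0 : 0 < η_dc) (hηdc1 : η_dc < 1)
    (hΔt : 0 < Δt) (hPch : 0 < Pch) (hPdc : 0 < Pdc)
    (hpch : 0 ≤ p_ch) (hpdc : 0 ≤ p_dc)
    (hch1 : 0 ≤ lam_ch1) (hch2 : 0 ≤ lam_ch2) (hdc1 : 0 ≤ lam_dc1) (hdc2 : 0 ≤ lam_dc2)
    (hS1 : 0 ≤ lam_S1) (hS2 : 0 ≤ lam_S2) (hrelax : 0 ≤ lam_relax)
    (hcs1 : lam_ch1 * p_ch = 0) (hcs2 : lam_dc1 * p_dc = 0)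
    (hstat1 : g_ch + lam_p - lam_ch1 + lam_ch2 + lam_relax / Pch + 2 * lam_S2 * p_ch + η_ch * Γ * Δt = 0)
    (hstat2 : g_dc - lam_p - lam_dc1 + lam_dc2 + lam_relax / Pdc + 2 * lam_S1 * p_dc - Γ * Δt / η_dc = 0)
    (hC4_1 : g_ch + g_dc ≥ 0) (hC4_2 : lam_p > -g_ch) :
    p_ch * p_dc = 0 := by
  by_contra hne
  have h1 : p_ch ≠ 0 := left_ne_zero_of_mul hne
  have h2 : p_dc ≠ 0 := right_ne_zero_of_mul hne
  have e1 : lam_ch1 = 0 := (mul_eq_zero.mp hcs1).resolve_right h1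
  have e2 : lam_dc1 = 0 := (mul_eq_zero.mp hcs2).resolve_right h2
  have a1 : 0 ≤ lam_relax / Pch := by positivity
  have a2 : 0 ≤ lam_relax / Pdc := by positivity
  have a3 : 0 ≤ 2 * lam_S2 * p_ch := by positivity
  have a4 : 0 ≤ 2 * lam_S1 * p_dc := by positivity
  have hinv : 1 < 1 / η_dc := by rw [lt_div_iff₀ hηdc0]; linarith
  have hG : Γ * Δt < 0 := by
    by_contra h
    have h' : 0 ≤ η_ch * (Γ * Δt) := mul_nonneg hηch0.le (not_lt.mp h)
    linarith
  have hprod : 0 < (Γ * Δt) * (η_ch - 1 / η_dc) := mul_pos_of_neg_of_neg hG (by linarith)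
  have hexp : (Γ * Δt) * (η_ch - 1 / η_dc) = η_ch * Γ * Δt - Γ * Δt / η_dc := by ring
  linarith
end

section
/- Under the KKT setup for a single storage unit at a single time period, if g_ch/η_dc + g_dc·η_ch > 0 and λ_p ≥ 0 (the Relaxation conditions of group C in [14], Condition C5, adapted to ACOPF), then p_ch · p_dc = 0, i.e., no simultaneous charging and discharging occurs. -/
theorem condition_C5_groupC_exact_relaxation
    (η_ch η_dc g_ch g_dc Δt Pch Pdc p_ch p_dc Γ lam_p lam_ch1 lam_ch2 lam_dc1 lam_dc2 lam_S1 lam_S2 lam_relax : ℝ)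
    (hηch0 : 0 < η_ch) (hηch1 : η_ch < 1) (hηdc0 : 0 < η_dc) (hηdc1 : η_dc < 1)
    (hΔt : 0 < Δt) (hPch : 0 < Pch) (hPdc : 0 < Pdc)
    (hpch : 0 ≤ p_ch) (hpdc : 0 ≤ p_dc)
    (hch1 : 0 ≤ lam_ch1) (hch2 : 0 ≤ lam_ch2) (hdc1 : 0 ≤ lam_dc1) (hdc2 : 0 ≤ lam_dc2)
    (hS1 : 0 ≤ lam_S1) (hS2 : 0 ≤ lam_S2) (hrelax : 0 ≤ lam_relax)
    (hcs1 : lam_ch1 * p_ch = 0) (hcs2 : lam_dc1 * p_dc = 0)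
    (hstat1 : g_ch + lam_p - lam_ch1 + lam_ch2 + lam_relax / Pch + 2 * lam_S2 * p_ch + η_ch * Γ * Δt = 0)
    (hstat2 : g_dc - lam_p - lam_dc1 + lam_dc2 + lam_relax / Pdc + 2 * lam_S1 * p_dc - Γ * Δt / η_dc = 0)
    (hC5_1 : g_ch / η_dc + g_dc * η_ch > 0) (hC5_2 : lam_p ≥ 0) :
    p_ch * p_dc = 0 := by
  by_contra hne
  have hc : p_ch ≠ 0 := left_ne_zero_of_mul hne
  have hd : p_dc ≠ 0 := right_ne_zero_of_mul hne
  have e1 : lam_ch1 = 0 := (mul_eq_zero.mp hcs1).resolve_right hc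
  have e2 : lam_dc1 = 0 := (mul_eq_zero.mp hcs2).resolve_right hd
  subst e1 e2
  have hi : 1 < η_dc⁻¹ := (one_lt_inv₀ hηdc0).mpr hηdc1
  have hA : 0 ≤ lam_ch2 + lam_relax / Pch + 2 * lam_S2 * p_ch := by positivity
  have hB : 0 ≤ lam_dc2 + lam_relax / Pdc + 2 * lam_S1 * p_dc := by positivity
  have h1 : 0 ≤ η_dc⁻¹ * (lam_ch2 + lam_relax / Pch + 2 * lam_S2 * p_ch) :=
    mul_nonneg (by linarith) hA
  have h2 := mul_nonneg hηch0.le hB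
  have h3 : 0 ≤ lam_p * (η_dc⁻¹ - η_ch) := mul_nonneg hC5_2 (by linarith)
  rw [div_eq_mul_inv] at hC5_1
  rw [div_eq_mul_inv (Γ * Δt)] at hstat2
  have key := congrArg (η_dc⁻¹ * ·) hstat1
  have key2 := congrArg (η_ch * ·) hstat2
  simp only [mul_zero] at key key2
  generalize η_dc⁻¹ = i at *
  generalize lam_relax / Pch = a at *
  generalize lam_relax / Pdc = b at *
  linarith
end

section
/- Under the KKT setup for a single storage unit at a single time period, if g_ch ≥ 0, g_dc ≥ 0, g_ch + g_dc > 0, and λ_p ≥ 0 (the Relaxation conditions in [15], Condition C6, adapted to ACOPF), then p_ch · p_dc = 0, i.e., no simultaneous charging and discharging occurs. -/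
theorem condition_C6_exact_relaxation
    (η_ch η_dc g_ch g_dc Δt Pch Pdc p_ch p_dc Γ lam_p lam_ch1 lam_ch2 lam_dc1 lam_dc2 lam_S1 lam_S2 lam_relax : ℝ)
    (hηch0 : 0 < η_ch) (hηch1 : η_ch < 1) (hηdc0 : 0 < η_dc) (hηdc1 : η_dc < 1)
    (hΔt : 0 < Δt) (hPch : 0 < Pch) (hPdc : 0 < Pdc)
    (hpch : 0 ≤ p_ch) (hpdc : 0 ≤ p_dc)
    (hch1 : 0 ≤ lam_ch1) (hch2 : 0 ≤ lam_ch2) (hdc1 : 0 ≤ lam_dc1) (hdc2 : 0 ≤ lam_dc2)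
    (hS1 : 0 ≤ lam_S1) (hS2 : 0 ≤ lam_S2) (hrelax : 0 ≤ lam_relax)
    (hcs1 : lam_ch1 * p_ch = 0) (hcs2 : lam_dc1 * p_dc = 0)
    (hstat1 : g_ch + lam_p - lam_ch1 + lam_ch2 + lam_relax / Pch + 2 * lam_S2 * p_ch + η_ch * Γ * Δt = 0)
    (hstat2 : g_dc - lam_p - lam_dc1 + lam_dc2 + lam_relax / Pdc + 2 * lam_S1 * p_dc - Γ * Δt / η_dc = 0)
    (hC6_1a : g_ch ≥ 0) (hC6_1b : g_dc ≥ 0) (hC6_1c : g_ch + g_dc > 0) (hC6_2 : lam_p ≥ 0) :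
    p_ch * p_dc = 0 := by
  by_contra hne
  have h1 : p_ch ≠ 0 := left_ne_zero_of_mul hne
  have h2 : p_dc ≠ 0 := right_ne_zero_of_mul hne
  have e1 : lam_ch1 = 0 := (mul_eq_zero.mp hcs1).resolve_right h1
  have e2 : lam_dc1 = 0 := (mul_eq_zero.mp hcs2).resolve_right h2
  have r1 : 0 ≤ lam_relax / Pch := by positivity
  have r2 : 0 ≤ lam_relax / Pdc := by positivity
  have s1 : 0 ≤ 2 * lam_S2 * p_ch := by positivity
  have s2 : 0 ≤ 2 * lam_S1 * p_dc := by positivity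
  obtain ⟨H, hH⟩ : ∃ H, H = Γ * Δt / η_dc := ⟨_, rfl⟩
  have hG : η_ch * Γ * Δt = (η_ch * η_dc) * H := by
    rw [hH]; field_simp
  rw [← hH] at hstat2
  rw [hG] at hstat1
  have hk0 : 0 < η_ch * η_dc := mul_pos hηch0 hηdc0
  have hk1 : η_ch * η_dc < 1 := by nlinarith
  have hHn : H ≤ 0 := by
    by_contra hc
    have := mul_pos hk0 (not_le.mp hc)
    linarith
  have hA : H ≤ (η_ch * η_dc) * H := by nlinarith
  linarith
end

section
/- Under the KKT setup for a single storage unit at a single time period, if g_ch = 0, g_dc > 0, and λ_p > 0 (the Relaxation conditions in [16], Condition C8), then p_ch · p_dc = 0, i.e., no simultaneous charging and discharging occurs. -/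
theorem condition_C8_exact_relaxation
    (η_ch η_dc g_ch g_dc Δt Pch Pdc p_ch p_dc Γ lam_p lam_ch1 lam_ch2 lam_dc1 lam_dc2 lam_S1 lam_S2 lam_relax : ℝ)
    (hηch0 : 0 < η_ch) (hηch1 : η_ch < 1) (hηdc0 : 0 < η_dc) (hηdc1 : η_dc < 1)
    (hΔt : 0 < Δt) (hPch : 0 < Pch) (hPdc : 0 < Pdc)
    (hpch : 0 ≤ p_ch) (hpdc : 0 ≤ p_dc)
    (hch1 : 0 ≤ lam_ch1) (hch2 : 0 ≤ lam_ch2) (hdc1 : 0 ≤ lam_dc1) (hdc2 : 0 ≤ lam_dc2)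
    (hS1 : 0 ≤ lam_S1) (hS2 : 0 ≤ lam_S2) (hrelax : 0 ≤ lam_relax)
    (hcs1 : lam_ch1 * p_ch = 0) (hcs2 : lam_dc1 * p_dc = 0)
    (hstat1 : g_ch + lam_p - lam_ch1 + lam_ch2 + lam_relax / Pch + 2 * lam_S2 * p_ch + η_ch * Γ * Δt = 0)
    (hstat2 : g_dc - lam_p - lam_dc1 + lam_dc2 + lam_relax / Pdc + 2 * lam_S1 * p_dc - Γ * Δt / η_dc = 0)
    (hC8_1a : g_ch = 0) (hC8_1b : g_dc > 0) (hC8_2 : lam_p > 0) :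
    p_ch * p_dc = 0 := by
  by_contra hne
  have hp : p_ch ≠ 0 := left_ne_zero_of_mul hne
  have hd : p_dc ≠ 0 := right_ne_zero_of_mul hne
  have h1 : lam_ch1 = 0 := (mul_eq_zero.mp hcs1).resolve_right hp
  have h2 : lam_dc1 = 0 := (mul_eq_zero.mp hcs2).resolve_right hd
  have a1 : 0 ≤ lam_relax / Pch := by positivity
  have a2 : 0 ≤ lam_relax / Pdc := by positivity
  have a3 : 0 ≤ 2 * lam_S2 * p_ch := by positivity
  have a4 : 0 ≤ 2 * lam_S1 * p_dc := by positivity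
  obtain ⟨x, hx⟩ : ∃ x, x = Γ * Δt := ⟨_, rfl⟩
  rw [mul_assoc η_ch, ← hx] at hstat1
  rw [← hx] at hstat2
  have b1 : η_ch * x ≤ -lam_p := by linarith
  have b2 : x < 0 := by
    by_contra h
    have := mul_nonneg hηch0.le (not_lt.mp h)
    linarith
  have b3 : x < -lam_p := by nlinarith
  have b4 : x / η_dc < x := by
    rw [div_lt_iff₀ hηdc0]
    nlinarith
  linarith
end

section
/- If g_ch + g_dc > 0, then −g_ch > λ^{p,C2}; consequently the region of locational marginal prices formed by Condition C2 (λ_p > λ^{p,C2}) contains the region formed by the Relaxation conditions of group B in [14] (λ_p ≥ −g_ch) (Lemma 4, key inequality (68)). -/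
theorem lemma4_key_inequality
    (η_ch η_dc g_ch g_dc : ℝ)
    (hηch0 : 0 < η_ch) (hηch1 : η_ch < 1) (hηdc0 : 0 < η_dc) (hηdc1 : η_dc < 1)
    (h : g_ch + g_dc > 0) :
    -g_ch > (g_ch / η_dc + g_dc * η_ch) / (η_ch - 1 / η_dc) := by
  have h1 : 1 < 1 / η_dc := by
    rw [lt_div_iff₀ hηdc0]; linarith
  have hd : η_ch - 1 / η_dc < 0 := by linarith
  have hp := mul_pos h hηch0
  have he : g_ch / η_dc = g_ch * (1 / η_dc) := by ring
  rw [gt_iff_lt, div_lt_iff_of_neg hd, he]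
  nlinarith
end
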